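/- Let Ψ be a parse tree all of whose nodes are green or yellow, let v be a yellow node of Ψ, and let lp(v) = v1 ⋯ vk be the long path starting at v. Then k ≥ 8, and |balance(v_i)| ≥ 2 for all 1 ≤ i ≤ 8. -/

import Mathlib

/-! ### Parse trees

A parse tree is a finite binary tree in which every inner node has exactly
two children.  Nodes of a parse tree are identified either with the subtree
rooted at them, or with the path (list of booleans, `false` = left,
`true` = right) leading to them from the root. -/

inductive PTree : Type
  | leaf : PTree
  | node : PTree → PTree → PTree

namespace PTree

/-- The height of a parse tree: the maximal number of nodes on a path from
the root to a leaf (a leaf has height 1). -/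
def height : PTree → ℕ
  | leaf => 1
  | node l r => 1 + max l.height r.height

/-- The number of leaves `‖Ψ‖` of a parse tree. -/
def leaves : PTree → ℕ
  | leaf => 1
  | node l r => l.leaves + r.leaves

/-- `balance(v)`: height of the right subtree minus height of the left
subtree (0 for a leaf). -/
def bal : PTree → ℤ
  | leaf => 0
  | node l r => (r.height : ℤ) - (l.height : ℤ)

/-- The absolute balance `|balance(v)|`. -/
def abal (t : PTree) : ℤ := |t.bal|

/-- `B(Ψ)`: the sum of the absolute balances of all (inner) nodes. -/
def totalBal : PTree → ℤ
  | leaf => 0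
  | node l r => |(r.height : ℤ) - (l.height : ℤ)| + l.totalBal + r.totalBal

def isLeaf : PTree → Prop
  | leaf => True
  | node _ _ => False

/-- A node is *green* if `height(Ψ_v) ≤ 10·log₂‖Ψ_v‖` (leaves are green by
convention). -/
def Green (t : PTree) : Prop :=
  t.isLeaf ∨ (t.height : ℝ) ≤ 10 * Real.logb 2 (t.leaves : ℝ)

/-- A node is *yellow* if `height(Ψ_v) − 1 ≤ 10·log₂‖Ψ_v‖ < height(Ψ_v)`. -/
def Yellow (t : PTree) : Prop :=
  ¬ t.isLeaf ∧ 10 * Real.logb 2 (t.leaves : ℝ) < (t.height : ℝ) ∧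
    (t.height : ℝ) - 1 ≤ 10 * Real.logb 2 (t.leaves : ℝ)

/-- A node is *red* if it is neither green nor yellow. -/
def Red (t : PTree) : Prop := ¬ t.Green ∧ ¬ t.Yellow

/-- `IsSubtree t s`: `t` is the subtree of `s` rooted at some node of `s`. -/
inductive IsSubtree : PTree → PTree → Prop
  | refl (t : PTree) : IsSubtree t t
  | left {t l r : PTree} : IsSubtree t l → IsSubtree t (node l r)
  | right {t l r : PTree} : IsSubtree t r → IsSubtree t (node l r)

/-- The subtree rooted at the node reached by following the path `p`
(`false` = left child, `true` = right child), if it exists. -/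
def subtreeAt : PTree → List Bool → Option PTree
  | t, [] => some t
  | leaf, _ :: _ => none
  | node l _, false :: p => subtreeAt l p
  | node _ r, true :: p => subtreeAt r p

/-- Replace the subtree at path `p` by `s`. -/
def replaceAt : PTree → List Bool → PTree → PTree
  | _, [], s => s
  | leaf, _ :: _, _ => leaf
  | node l r, false :: p, s => node (replaceAt l p s) r
  | node l r, true :: p, s => node l (replaceAt r p s)

/-- `onLongPath t p`: the node of `t` reached by the path `p` lies on the
long path `lp(root of t)`.  The long path of `v` is `v` itself if
`balance(v) = 0` (in particular if `v` is a leaf) and otherwise continues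
into the strictly deeper subtree. -/
def onLongPath : PTree → List Bool → Prop
  | _, [] => True
  | leaf, _ :: _ => False
  | node l r, false :: p => r.height < l.height ∧ onLongPath l p
  | node l r, true :: p => l.height < r.height ∧ onLongPath r p

/-- The long path `lp(v)` of (the subtree rooted at) `v`, as the list of the
subtrees rooted at its nodes. -/
def lpList : PTree → List PTree
  | leaf => [leaf]
  | node l r =>
    if l.height = r.height then [node l r]
    else if l.height < r.height then node l r :: lpList r
    else node l r :: lpList l

/-- `IsComb t a b` : `t` is an inner node whose two subtrees are `a` and `b`
(in either order). -/
def IsComb (t a b : PTree) : Prop := t = node a b ∨ t = node b a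

end PTree

/-!
Measure how far a tree is from being green by its *excess* `height − 10·log₂ ‖·‖`, which is positive
at a yellow node and at most `1` at every green or yellow one. Moving to a deeper child lowers the
excess by at most `1`. On the other hand, the child with fewer leaves has at most half of them, so a
node `t` whose children have excess at most `1` has excess at most `1 + |balance t| + 1 − 10`. Hence
a node with `|balance t| ≤ 1` has excess at most `−7`, and starting from a positive excess it takes
more than seven steps to get there. No leaf is met earlier, because the strictly deeper child of a
node is never a leaf.
-/

namespace PTree

variable {t a b : PTree} {c δ : ℝ}

theorem height_pos (t : PTree) : 0 < t.height := by
  cases t <;> simp only [height] <;> omega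

theorem leaves_pos (t : PTree) : 0 < t.leaves := by
  induction t with
  | leaf => simp only [leaves, Nat.one_pos]
  | node l r ihl _ => exact Nat.add_pos_left ihl _

theorem one_lt_height_of_not_isLeaf (ht : ¬ t.isLeaf) : 1 < t.height := by
  cases t with
  | leaf => exact absurd trivial ht
  | node l r => have := l.height_pos; simp only [height]; omega

theorem IsSubtree.trans {s t u : PTree} (hst : IsSubtree s t) (htu : IsSubtree t u) :
    IsSubtree s u := by
  induction htu with
  | refl => exact hst
  | left _ ih => exact .left ih
  | right _ ih => exact .right ih

theorem exists_isComb_of_one_lt_height {α : Type*} [LinearOrder α] (f : PTree → α)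
    (ht : 1 < t.height) : ∃ a b, IsComb t a b ∧ f a ≤ f b := by
  cases t with
  | leaf => exact absurd ht (lt_irrefl 1)
  | node l r =>
    rcases le_total (f l) (f r) with h | h
    · exact ⟨l, r, .inl rfl, h⟩
    · exact ⟨r, l, .inr rfl, h⟩

namespace IsComb

theorem symm (h : IsComb t a b) : IsComb t b a := Or.symm h

theorem isSubtree (h : IsComb t a b) : IsSubtree a t := by
  rcases h with rfl | rfl
  · exact .left (.refl a)
  · exact .right (.refl a)

theorem height_eq (h : IsComb t a b) : t.height = 1 + max a.height b.height := by
  rcases h with rfl | rfl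
  · rfl
  · rw [height, max_comm]

theorem leaves_eq (h : IsComb t a b) : t.leaves = a.leaves + b.leaves := by
  rcases h with rfl | rfl
  · rfl
  · rw [leaves, add_comm]

theorem abal_eq (h : IsComb t a b) : t.abal = |(b.height : ℤ) - a.height| := by
  rcases h with rfl | rfl
  · rfl
  · rw [abal, bal, abs_sub_comm]

theorem height_le_add_abal (h : IsComb t a b) : (t.height : ℤ) ≤ a.height + t.abal + 1 := by
  have := le_abs_self ((b.height : ℤ) - a.height)
  have := abs_nonneg ((b.height : ℤ) - a.height)
  rw [h.height_eq, h.abal_eq]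
  omega

theorem lpList_eq (h : IsComb t a b) (hlt : a.height < b.height) : t.lpList = t :: b.lpList := by
  rcases h with rfl | rfl
  · rw [lpList, if_neg hlt.ne, if_pos hlt]
  · rw [lpList, if_neg hlt.ne', if_neg hlt.not_gt]

end IsComb

/-- The excess of a tree at rate `c`: the amount by which its height exceeds `c·log₂` of its number
of leaves. At rate `10`, an inner node is green if its excess is at most `0`, yellow if its excess
lies in `(0, 1]`, and red otherwise. -/
noncomputable def excess (c : ℝ) (t : PTree) : ℝ :=
  t.height - c * Real.logb 2 t.leaves

theorem Yellow.excess_pos (ht : t.Yellow) : 0 < t.excess 10 :=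
  sub_pos.2 ht.2.1

theorem Yellow.excess_le_one (ht : t.Yellow) : t.excess 10 ≤ 1 :=
  sub_le_comm.1 ht.2.2

theorem Green.excess_le_one (ht : t.Green) : t.excess 10 ≤ 1 := by
  rcases ht with hleaf | hgreen
  · cases t with
    | leaf => simp [excess, height, leaves]
    | node l r => exact hleaf.elim
  · exact (sub_nonpos.2 hgreen).trans zero_le_one

theorem IsComb.excess_le_add_one (h : IsComb t a b) (hc : 0 ≤ c) (hab : a.height ≤ b.height) :
    t.excess c ≤ b.excess c + 1 := by
  have hheight : (t.height : ℝ) = 1 + b.height := by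
    rw [h.height_eq, max_eq_right hab]
    norm_cast
  have hlog : Real.logb 2 b.leaves ≤ Real.logb 2 t.leaves :=
    Real.logb_le_logb_of_le one_lt_two (mod_cast b.leaves_pos)
      (mod_cast h.leaves_eq ▸ Nat.le_add_left _ _)
  have := mul_le_mul_of_nonneg_left hlog hc
  unfold excess
  linarith

theorem IsComb.excess_le_add_abal (h : IsComb t a b) (hc : 0 ≤ c) (hab : a.leaves ≤ b.leaves) :
    t.excess c ≤ a.excess c + t.abal + 1 - c := by
  have hheight : (t.height : ℝ) ≤ a.height + t.abal + 1 := mod_cast h.height_le_add_abal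
  have ha : (0 : ℝ) < a.leaves := mod_cast a.leaves_pos
  have hlog : 1 + Real.logb 2 a.leaves ≤ Real.logb 2 t.leaves := by
    have htwice : 2 * a.leaves ≤ t.leaves := by rw [h.leaves_eq]; omega
    calc 1 + Real.logb 2 a.leaves
        = Real.logb 2 (2 * a.leaves) := by
          rw [Real.logb_mul two_ne_zero ha.ne', Real.logb_self_eq_one one_lt_two]
      _ ≤ Real.logb 2 t.leaves :=
          Real.logb_le_logb_of_le one_lt_two (by positivity) (mod_cast htwice)
  have := mul_le_mul_of_nonneg_left hlog hc
  unfold excess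
  linarith

theorem lt_abal_of_lt_excess (hc : 0 ≤ c) (k : ℕ) (ht : 1 < t.height)
    (hδ : ∀ a b, IsComb t a b → a.excess c ≤ δ) (hk : δ + k + 1 - c < t.excess c) :
    (k : ℤ) < t.abal := by
  obtain ⟨a, b, hab, hle⟩ := exists_isComb_of_one_lt_height leaves ht
  have := hab.excess_le_add_abal hc hle
  have := hδ a b hab
  have : (k : ℝ) < t.abal := by linarith
  exact_mod_cast this

theorem le_length_lpList_and_lt_abal_of_lt_excess (hc : 0 ≤ c) (k n : ℕ) (ht : 1 < t.height)
    (hδ : ∀ s, IsSubtree s t → s.excess c ≤ δ) (hn : δ + k + n - c < t.excess c) :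
    n ≤ t.lpList.length ∧ ∀ u ∈ t.lpList.take n, (k : ℤ) < u.abal := by
  induction n generalizing t with
  | zero => simp
  | succ n ih =>
    push_cast at hn
    have htk : (k : ℤ) < t.abal :=
      lt_abal_of_lt_excess hc k ht (fun a _ hab => hδ a hab.isSubtree)
        (by linarith [n.cast_nonneg (α := ℝ)])
    obtain ⟨a, b, hab, hle⟩ := exists_isComb_of_one_lt_height height ht
    have hlt : a.height < b.height := by
      refine hle.lt_of_ne fun heq => ?_
      rw [hab.abal_eq, heq, sub_self, abs_zero] at htk
      omega
    have hb : 1 < b.height := (Nat.succ_le_of_lt a.height_pos).trans_lt hlt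
    obtain ⟨hlength, htake⟩ := ih hb (fun s hs => hδ s (hs.trans hab.symm.isSubtree))
      (by linarith [hab.excess_le_add_one hc hle])
    rw [hab.lpList_eq hlt, List.length_cons, List.take_succ_cons, List.forall_mem_cons]
    exact ⟨Nat.succ_le_succ hlength, htk, htake⟩

end PTree

/-- Let `Ψ` be a parse tree all of whose nodes are green or
yellow, and let `v` be a yellow node of `Ψ` with long path
`lp(v) = v₁ ⋯ v_k`.  Then `k ≥ 8` and `|balance(v_i)| ≥ 2` for all
`1 ≤ i ≤ 8`. -/
theorem yellow_node_long_path_imbalanced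
    (Ψ v : PTree)
    (hsub : PTree.IsSubtree v Ψ)
    (hgy : ∀ t, PTree.IsSubtree t Ψ → t.Green ∨ t.Yellow)
    (hy : v.Yellow) :
    8 ≤ v.lpList.length ∧ ∀ u ∈ v.lpList.take 8, 2 ≤ u.abal := by
  have hexcess : ∀ s, PTree.IsSubtree s v → s.excess 10 ≤ 1 := fun s hs =>
    (hgy s (hs.trans hsub)).elim PTree.Green.excess_le_one PTree.Yellow.excess_le_one
  have hpos : 1 + (1 : ℕ) + (8 : ℕ) - 10 < v.excess 10 := by
    norm_num [hy.excess_pos]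
  exact PTree.le_length_lpList_and_lt_abal_of_lt_excess (by norm_num) 1 8
    (PTree.one_lt_height_of_not_isLeaf hy.1) hexcess hpos
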